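/- Let f ≥ 1 be a natural number, n = 3f+1, and fix a subset B of the n nodes with |B| = f (the Byzantine nodes). Let ε > 0 and φ ≥ 1 be real numbers, and let n_c be a natural number with 1 ≤ n_c ≤ n and n_c ≥ 18·log(2φ/ε). Let S_1, …, S_φ be φ mutually independent subsets, each chosen uniformly at random from all n_c-element subsets of the n nodes. Then with probability at least 1 − ε/2, every one of the φ sampled committees contains at most n_c/2 Byzantine nodes, i.e. P(∀ i ∈ {1,…,φ}, |S_i ∩ B| ≤ n_c/2) ≥ 1 − ε/2. -/

import Mathlib

open Finset

/-!
Only the fraction `m = |B| / n` of bad nodes matters. A set `A` of `j` nodes lies in a random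
`k`-committee `S` with probability `C(k, j) / C(n, j)`, so expanding `(1 + x) ^ |S ∩ B|` over the
subsets of `S ∩ B` shows that, for `x ≥ 0`, its mean is at most the binomial value
`(1 + m x) ^ k`. Taking `x = exp t - 1`, Hoeffding's lemma and Markov's inequality give
`P(|S ∩ B| > q k) ≤ exp (-2 (q - m)² k)` for `q ≥ m`, and Bernoulli's inequality multiplies this
failure probability by at most the number of committees. The constant `18` is
`1 / (2 (1/2 - 1/3)²)`: a bad committee exceeds `q = 1/2`, whereas `m ≤ 1/3`.
-/

lemma choose_mul_pow_le_choose_mul_pow {b n : ℕ} (hbn : b ≤ n) (j : ℕ) :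
    b.choose j * n ^ j ≤ n.choose j * b ^ j := by
  have descFactorial_le : b.descFactorial j * n ^ j ≤ n.descFactorial j * b ^ j := by
    induction j with
    | zero => simp
    | succ j ih =>
      have factor_le : (b - j) * n ≤ (n - j) * b := by
        rw [Nat.sub_mul, Nat.sub_mul, mul_comm b n]
        gcongr
      calc b.descFactorial (j + 1) * n ^ (j + 1)
          = (b - j) * n * (b.descFactorial j * n ^ j) := by rw [Nat.descFactorial_succ]; ring
        _ ≤ (n - j) * b * (n.descFactorial j * b ^ j) := Nat.mul_le_mul factor_le ih
        _ = n.descFactorial (j + 1) * b ^ (j + 1) := by rw [Nat.descFactorial_succ]; ring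
  refine Nat.le_of_mul_le_mul_left ?_ j.factorial_pos
  simpa only [Nat.descFactorial_eq_factorial_mul_choose, mul_assoc] using descFactorial_le

lemma choose_div_choose_le_div_pow {K : Type*} [Field K] [LinearOrder K] [IsStrictOrderedRing K]
    {b n : ℕ} (hbn : b ≤ n) (j : ℕ) :
    (b.choose j / n.choose j : K) ≤ (b / n : K) ^ j := by
  obtain rfl | hn := n.eq_zero_or_pos
  · obtain rfl := Nat.le_zero.1 hbn
    cases j <;> simp
  · refine div_le_of_le_mul₀ (by positivity) (by positivity) ?_
    rw [div_pow, div_mul_eq_mul_div, mul_comm, le_div_iff₀ (by positivity)]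
    exact_mod_cast choose_mul_pow_le_choose_mul_pow hbn j

lemma sum_range_choose_mul_pow_le {R : Type*} [CommSemiring R] [PartialOrder R] [IsOrderedRing R]
    {y : R} (hy : 0 ≤ y) (k m : ℕ) :
    ∑ j ∈ range m, k.choose j * y ^ j ≤ (1 + y) ^ k := by
  have binomial : (1 + y) ^ k = ∑ j ∈ range (k + 1), k.choose j * y ^ j := by
    simp only [add_comm 1 y, add_pow, one_pow, mul_one, mul_comm]
  rw [binomial, ← sum_filter_add_sum_filter_not (range m) (· ≤ k)]
  have beyond_eq_zero : ∑ j ∈ range m with ¬ j ≤ k, k.choose j * y ^ j = 0 :=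
    sum_eq_zero fun j hj ↦ by simp [Nat.choose_eq_zero_of_lt (not_le.1 (mem_filter.1 hj).2)]
  rw [beyond_eq_zero, add_zero]
  refine sum_le_sum_of_subset_of_nonneg (fun j hj ↦ ?_) fun _ _ _ ↦ by positivity
  exact mem_range.2 (Nat.lt_succ_of_le (mem_filter.1 hj).2)

open ProbabilityTheory in
lemma one_add_mul_exp_sub_one_le {p : ℝ} (hp : p ∈ unitInterval) (t : ℝ) :
    1 + p * (Real.exp t - 1) ≤ Real.exp (p * t + t ^ 2 / 8) := by
  let X : Bool → ℝ := fun b ↦ cond b 1 0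
  have subgaussian := hasSubgaussianMGF_of_mem_Icc (X := X) (a := 0) (b := 1)
    (μ := bernoulliMeasure true false ⟨p, hp⟩) (by fun_prop)
    (.of_forall fun b ↦ by cases b <;> simp [X])
  have centred_mgf_le : p * Real.exp (t * (1 - p)) + (1 - p) * Real.exp (-(t * p)) ≤
      Real.exp (t ^ 2 / 8) := by
    convert subgaussian.mgf_le t using 2
    · simp [mgf, X, integral_bernoulliMeasure]
    · simp only [sub_zero, nnnorm_one, NNReal.coe_pow, NNReal.coe_div, NNReal.coe_one,
        NNReal.coe_ofNat]
      ring
  calc 1 + p * (Real.exp t - 1)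
      = Real.exp (p * t) * (p * Real.exp (t * (1 - p)) + (1 - p) * Real.exp (-(t * p))) := by
        have exp_t : Real.exp (p * t) * Real.exp (t * (1 - p)) = Real.exp t := by
          rw [← Real.exp_add]; congr 1; ring
        have exp_zero : Real.exp (p * t) * Real.exp (-(t * p)) = 1 := by
          rw [← Real.exp_add, mul_comm, add_neg_cancel, Real.exp_zero]
        linear_combination -p * exp_t - (1 - p) * exp_zero
    _ ≤ Real.exp (p * t) * Real.exp (t ^ 2 / 8) := by gcongr
    _ = Real.exp (p * t + t ^ 2 / 8) := (Real.exp_add _ _).symm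

lemma exp_mul_card_filter_lt_le_sum_exp {α : Type*} {t : ℝ} (ht : 0 ≤ t) (s : Finset α)
    (X : α → ℝ) (a : ℝ) :
    Real.exp (t * a) * #{x ∈ s | a < X x} ≤ ∑ x ∈ s, Real.exp (t * X x) := by
  calc Real.exp (t * a) * #{x ∈ s | a < X x}
      = ∑ x ∈ s with a < X x, Real.exp (t * a) := by rw [sum_const, nsmul_eq_mul, mul_comm]
    _ ≤ ∑ x ∈ s with a < X x, Real.exp (t * X x) := by
        gcongr with x hx
        exact (mem_filter.1 hx).2.le
    _ ≤ ∑ x ∈ s, Real.exp (t * X x) :=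
        sum_le_sum_of_subset_of_nonneg (filter_subset _ _) fun _ _ _ ↦ (Real.exp_pos _).le

section Committee

variable {α : Type*} [DecidableEq α] {s A B : Finset α}

lemma card_powersetCard_filter_superset {K : Type*} [Field K] [CharZero K] (hA : A ⊆ s) (k : ℕ) :
    (#{S ∈ powersetCard k s | A ⊆ S} : K) = (#s).choose k * (k.choose #A / (#s).choose #A) := by
  have choose_ne_zero : ((#s).choose #A : K) ≠ 0 :=
    mod_cast (Nat.choose_pos (card_le_card hA)).ne'
  rw [← mul_div_assoc, eq_div_iff choose_ne_zero]
  obtain hAk | hkA := le_or_gt #A k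
  · rw [card_filter_powersetCard_subset A s k hA hAk, mul_comm]
    exact_mod_cast (Nat.choose_mul hAk).symm
  · have no_superset : {S ∈ powersetCard k s | A ⊆ S} = ∅ :=
      filter_false_of_mem fun S hS hAS ↦
        hkA.not_ge ((card_le_card hAS).trans_eq (mem_powersetCard.1 hS).2)
    simp [no_superset, Nat.choose_eq_zero_of_lt hkA]

lemma one_add_pow_card_inter {R : Type*} [CommSemiring R] (S T : Finset α) (x : R) :
    (1 + x) ^ #(S ∩ T) = ∑ A ∈ T.powerset, if A ⊆ S then x ^ #A else 0 := by
  have powerset_inter_eq : (S ∩ T).powerset = {A ∈ T.powerset | A ⊆ S} := by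
    ext A
    simp only [mem_powerset, subset_inter_iff, mem_filter, and_comm]
  rw [← sum_filter, ← powerset_inter_eq, add_comm, ← sum_pow_mul_eq_add_pow]
  simp only [one_pow, mul_one]

lemma sum_powersetCard_one_add_pow_card_inter {K : Type*} [Field K] [CharZero K] (hB : B ⊆ s)
    (k : ℕ) (x : K) :
    ∑ S ∈ powersetCard k s, (1 + x) ^ #(S ∩ B) =
      (#s).choose k *
        ∑ j ∈ range (#B + 1), k.choose j * ((#B).choose j / (#s).choose j * x ^ j) := by
  calc ∑ S ∈ powersetCard k s, (1 + x) ^ #(S ∩ B)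
      = ∑ A ∈ B.powerset, #{S ∈ powersetCard k s | A ⊆ S} * x ^ #A := by
        simp only [one_add_pow_card_inter]
        rw [sum_comm]
        simp only [← sum_filter, sum_const, nsmul_eq_mul]
    _ = ∑ A ∈ B.powerset, (#s).choose k * (k.choose #A / (#s).choose #A) * x ^ #A :=
        sum_congr rfl fun A hA ↦ by
          rw [card_powersetCard_filter_superset ((mem_powerset.1 hA).trans hB)]
    _ = ∑ j ∈ range (#B + 1),
          (#B).choose j • ((#s).choose k * (k.choose j / (#s).choose j) * x ^ j) :=
        sum_powerset_apply_card fun j ↦ (#s).choose k * (k.choose j / (#s).choose j) * x ^ j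
    _ = _ := by
        rw [mul_sum]
        refine sum_congr rfl fun j _ ↦ ?_
        rw [nsmul_eq_mul]
        ring

lemma sum_powersetCard_one_add_pow_card_inter_le {K : Type*} [Field K] [LinearOrder K]
    [IsStrictOrderedRing K] (hB : B ⊆ s) (k : ℕ) {x : K} (hx : 0 ≤ x) :
    ∑ S ∈ powersetCard k s, (1 + x) ^ #(S ∩ B) ≤ (#s).choose k * (1 + #B / #s * x) ^ k := by
  rw [sum_powersetCard_one_add_pow_card_inter hB]
  gcongr
  refine (sum_le_sum fun j _ ↦ ?_).trans
    (sum_range_choose_mul_pow_le (y := #B / #s * x) (by positivity) k (#B + 1))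
  rw [mul_pow]
  gcongr
  exact choose_div_choose_le_div_pow (card_le_card hB) j

lemma sum_powersetCard_exp_mul_card_inter_le (hB : B ⊆ s) (k : ℕ) {t : ℝ} (ht : 0 ≤ t) :
    ∑ S ∈ powersetCard k s, Real.exp (t * #(S ∩ B)) ≤
      (#s).choose k * Real.exp (k * (#B / #s * t + t ^ 2 / 8)) := by
  have fraction_mem : (#B / #s : ℝ) ∈ unitInterval :=
    ⟨by positivity, div_le_one_of_le₀ (mod_cast card_le_card hB) (by positivity)⟩
  have exp_sub_one_nonneg : 0 ≤ Real.exp t - 1 := sub_nonneg.2 (Real.one_le_exp ht)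
  calc ∑ S ∈ powersetCard k s, Real.exp (t * #(S ∩ B))
      = ∑ S ∈ powersetCard k s, (1 + (Real.exp t - 1)) ^ #(S ∩ B) := by
        simp only [add_sub_cancel, ← Real.exp_nat_mul, mul_comm]
    _ ≤ (#s).choose k * (1 + #B / #s * (Real.exp t - 1)) ^ k :=
        sum_powersetCard_one_add_pow_card_inter_le hB k exp_sub_one_nonneg
    _ ≤ (#s).choose k * Real.exp (#B / #s * t + t ^ 2 / 8) ^ k := by
        gcongr
        exact one_add_mul_exp_sub_one_le fraction_mem t
    _ = _ := by rw [← Real.exp_nat_mul]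

lemma card_filter_lt_card_inter_le (hB : B ⊆ s) (k : ℕ) {p q : ℝ} (hp : (#B / #s : ℝ) ≤ p)
    (hpq : p ≤ q) :
    (#{S ∈ powersetCard k s | q * k < #(S ∩ B)} : ℝ) ≤
      Real.exp (-(2 * (q - p) ^ 2 * k)) * #(powersetCard k s) := by
  -- The minimiser of the exponent `k * (p * t + t ^ 2 / 8) - t * (q * k)`.
  let t : ℝ := 4 * (q - p)
  have t_nonneg : 0 ≤ t := mul_nonneg (by norm_num) (sub_nonneg.2 hpq)
  refine le_of_mul_le_mul_left ?_ (Real.exp_pos (t * (q * k)))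
  calc Real.exp (t * (q * k)) * #{S ∈ powersetCard k s | q * k < #(S ∩ B)}
      ≤ ∑ S ∈ powersetCard k s, Real.exp (t * #(S ∩ B)) :=
        exp_mul_card_filter_lt_le_sum_exp t_nonneg (powersetCard k s) (fun S ↦ #(S ∩ B)) (q * k)
    _ ≤ (#s).choose k * Real.exp (k * (#B / #s * t + t ^ 2 / 8)) :=
        sum_powersetCard_exp_mul_card_inter_le hB k t_nonneg
    _ ≤ (#s).choose k * Real.exp (k * (p * t + t ^ 2 / 8)) := by gcongr
    _ = Real.exp (t * (q * k)) *
          (Real.exp (-(2 * (q - p) ^ 2 * k)) * #(powersetCard k s)) := by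
        rw [card_powersetCard, ← mul_assoc (Real.exp _), ← Real.exp_add, mul_comm]
        congr 2
        ring

end Committee

lemma one_sub_card_mul_le_card_filter_piFinset_div {α ι : Type*} [Fintype ι] [DecidableEq ι]
    {s : Finset α} (hs : s.Nonempty) {P : α → Prop} [DecidablePred P] {δ : ℝ}
    (hP : (#{x ∈ s | ¬ P x} : ℝ) ≤ δ * #s) :
    1 - Fintype.card ι * δ ≤
      (#{T ∈ Fintype.piFinset fun _ : ι ↦ s | ∀ i, P (T i)} : ℝ) /
        #(Fintype.piFinset fun _ : ι ↦ s) := by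
  have forall_iff_mem : {T ∈ Fintype.piFinset fun _ : ι ↦ s | ∀ i, P (T i)} =
      Fintype.piFinset fun _ : ι ↦ {x ∈ s | P x} := by
    ext T
    simp only [mem_filter, Fintype.mem_piFinset, forall_and]
  have hs_pos : (0 : ℝ) < #s := mod_cast hs.card_pos
  have one_sub_le : 1 - δ ≤ (#{x ∈ s | P x} / #s : ℝ) := by
    have card_split : (#{x ∈ s | P x} + #{x ∈ s | ¬ P x} : ℝ) = #s :=
      mod_cast card_filter_add_card_filter_not (s := s) P
    rw [le_div_iff₀ hs_pos]
    linarith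
  have ratio_nonneg : 0 ≤ (#{x ∈ s | P x} / #s : ℝ) := by positivity
  calc 1 - Fintype.card ι * δ
      ≤ 1 + Fintype.card ι * (#{x ∈ s | P x} / #s - 1 : ℝ) := by
        nlinarith [(Fintype.card ι).cast_nonneg (α := ℝ)]
    _ ≤ (1 + (#{x ∈ s | P x} / #s - 1 : ℝ)) ^ Fintype.card ι :=
        one_add_mul_le_pow (by linarith) _
    _ = _ := by
        rw [add_sub_cancel, forall_iff_mem, div_pow]
        simp only [Fintype.card_piFinset, prod_const, card_univ, Nat.cast_pow]

lemma mul_exp_neg_le_of_log_div_le {a δ x : ℝ} (hδ : 0 < δ) (h : Real.log (a / δ) ≤ x) :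
    a * Real.exp (-x) ≤ δ := by
  have div_le : a / δ ≤ Real.exp x := (Real.le_exp_log _).trans (Real.exp_le_exp.2 h)
  rw [Real.exp_neg, ← div_eq_mul_inv, div_le_iff₀ (Real.exp_pos x)]
  exact (div_le_iff₀' hδ).1 div_le

theorem stmt_10_general {α ι : Type*} [DecidableEq α] [Fintype ι] [DecidableEq ι]
    {s B : Finset α} (hB : B ⊆ s) {p q δ : ℝ} (hp : (#B / #s : ℝ) ≤ p) (hpq : p ≤ q)
    (hδ : 0 < δ) {k : ℕ} (hk : k ≤ #s)
    (hlog : Real.log (Fintype.card ι / δ) ≤ 2 * (q - p) ^ 2 * k) :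
    1 - δ ≤
      (#{T ∈ Fintype.piFinset fun _ : ι ↦ powersetCard k s | ∀ i, (#(T i ∩ B) : ℝ) ≤ q * k} : ℝ) /
        #(Fintype.piFinset fun _ : ι ↦ powersetCard k s) := by
  have tail := card_filter_lt_card_inter_le hB k hp hpq
  exact (sub_le_sub_left (mul_exp_neg_le_of_log_div_le hδ hlog) 1).trans
    (one_sub_card_mul_le_card_filter_piFinset_div (P := fun S ↦ (#(S ∩ B) : ℝ) ≤ q * k)
      (powersetCard_nonempty.2 hk) (by simpa only [not_le] using tail))

/-- First half of Theorem 3 (success-prob): sample `φ` mutually independent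
committees, each uniform over the `nc`-element subsets of the `n = 3f+1`
nodes (modelled by the uniform distribution on tuples of `φ` such subsets),
with `nc ≥ 18·log(2φ/ε)`.  Then with probability at least `1 − ε/2` every
committee contains at most `nc/2` Byzantine nodes (members of the fixed set
`B` with `|B| = f`). -/
theorem stmt_10 (f : ℕ) (hf : 1 ≤ f) (n : ℕ) (hn : n = 3 * f + 1)
    (B : Finset (Fin n)) (hB : B.card = f)
    (ε : ℝ) (hε : 0 < ε) (φ : ℕ) (hφ : 1 ≤ φ)
    (nc : ℕ) (hnc1 : 1 ≤ nc) (hnc2 : nc ≤ n)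
    (hnc3 : 18 * Real.log (2 * (φ : ℝ) / ε) ≤ (nc : ℝ)) :
    1 - ε / 2 ≤
      (((Fintype.piFinset
            (fun _ : Fin φ => Finset.powersetCard nc (Finset.univ : Finset (Fin n)))).filter
          (fun T => ∀ i : Fin φ, 2 * ((T i ∩ B).card) ≤ nc)).card : ℝ) /
        ((Fintype.piFinset
            (fun _ : Fin φ => Finset.powersetCard nc (Finset.univ : Finset (Fin n)))).card : ℝ) := by
  have byzantine_fraction : (#B / #(univ : Finset (Fin n)) : ℝ) ≤ 1 / 3 := by
    rw [hB, card_fin, hn, div_le_iff₀ (by positivity)]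
    push_cast
    linarith
  have hlog : Real.log (Fintype.card (Fin φ) / (ε / 2)) ≤ 2 * (1 / 2 - 1 / 3) ^ 2 * nc := by
    rw [Fintype.card_fin, div_div_eq_mul_div, mul_comm (φ : ℝ)]
    linarith
  have le_half_iff (a : ℕ) : (a : ℝ) ≤ 1 / 2 * nc ↔ 2 * a ≤ nc := by
    rw [one_div_mul_eq_div, le_div_iff₀' zero_lt_two]
    exact_mod_cast Iff.rfl
  simpa only [le_half_iff] using
    stmt_10_general (ι := Fin φ) (subset_univ B) byzantine_fraction (by norm_num) (half_pos hε)
      (hnc2.trans_eq (card_fin n).symm) hlog
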